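/- (Noiseless exact recovery.) Under the hypotheses of Theorem 1 with E = 0 (so Y = ΦX), if moreover 2α²γ² + δ² < 1, then ρ = √(2α²γ²/(1 − δ²)) < 1 and the iterates of the OSNST+HT+f-FB algorithm satisfy ‖X − W^k‖_F ≤ ρ^k·‖X‖_F for all k ≥ 1; in particular W^k converges to X as k → ∞. -/

import Mathlib

open Matrix BigOperators

/-- Frobenius norm of a complex matrix. -/
noncomputable def frobNorm {m n : Type*} [Fintype m] [Fintype n] (A : Matrix m n ℂ) : ℝ :=
  Real.sqrt (∑ i, ∑ j, ‖A i j‖ ^ 2)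

open scoped Classical in
/-- The row support of a matrix: indices of its nonzero rows. -/
noncomputable def rowSupp {N L : ℕ} (X : Matrix (Fin N) (Fin L) ℂ) : Finset (Fin N) :=
  Finset.univ.filter (fun i => X i ≠ 0)

/-- `X_(T)`: the matrix obtained from `X` by zeroing every row with index outside `T`. -/
def rowRestrict {N L : ℕ} (T : Finset (Fin N)) (X : Matrix (Fin N) (Fin L) ℂ) :
    Matrix (Fin N) (Fin L) ℂ :=
  fun i j => if i ∈ T then X i j else 0

/-- Euclidean norm of a complex vector. -/
noncomputable def vecNorm {ι : Type*} [Fintype ι] (v : ι → ℂ) : ℝ :=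
  Real.sqrt (∑ i, ‖v i‖ ^ 2)

/-- `Φ_T`: the submatrix of columns of `Φ` indexed by `T`. -/
def colSub {M N : ℕ} (Φ : Matrix (Fin M) (Fin N) ℂ) (T : Finset (Fin N)) :
    Matrix (Fin M) {x // x ∈ T} ℂ :=
  fun i j => Φ i j.val

/-- `X_{(T)}`: the submatrix of rows of `X` indexed by `T`. -/
def rowSub {N L : ℕ} (T : Finset (Fin N)) (X : Matrix (Fin N) (Fin L) ℂ) :
    Matrix {x // x ∈ T} (Fin L) ℂ :=
  fun i j => X i.val j

/-- The set of values `‖R v‖` over unit vectors `v` (the "singular value range"). -/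
noncomputable def sigmaSet {L : ℕ} (R : Matrix (Fin L) (Fin L) ℂ) : Set ℝ :=
  {c | ∃ v : Fin L → ℂ, vecNorm v = 1 ∧ c = vecNorm (R.mulVec v)}

/-- The largest singular value of `R`. -/
noncomputable def sigmaMax {L : ℕ} (R : Matrix (Fin L) (Fin L) ℂ) : ℝ :=
  sSup (sigmaSet R)

/-- The smallest singular value of `R` (for invertible `R`). -/
noncomputable def sigmaMin {L : ℕ} (R : Matrix (Fin L) (Fin L) ℂ) : ℝ :=
  sInf (sigmaSet R)

/-- Spectral (operator) norm of a square complex matrix. -/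
noncomputable def specNorm {ι : Type*} [Fintype ι] (A : Matrix ι ι ℂ) : ℝ :=
  sSup {c | ∃ v : ι → ℂ, vecNorm v = 1 ∧ c = vecNorm (A.mulVec v)}

/-- `δ` is a restricted isometry constant (RIC) of order `t` for `A`, relative to matrices with
`L` columns: `(1-δ)‖Z‖_F² ≤ ‖AZ‖_F² ≤ (1+δ)‖Z‖_F²` for every `t` row-sparse `Z`. -/
def IsRIC {M N : ℕ} (L : ℕ) (A : Matrix (Fin M) (Fin N) ℂ) (t : ℕ) (δ : ℝ) : Prop :=
  ∀ Z : Matrix (Fin N) (Fin L) ℂ, (rowSupp Z).card ≤ t →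
    (1 - δ) * frobNorm Z ^ 2 ≤ frobNorm (A * Z) ^ 2 ∧
      frobNorm (A * Z) ^ 2 ≤ (1 + δ) * frobNorm Z ^ 2

/-- `γ` is a preconditioned restricted isometry constant (P-RIC) of order `t` for `Φ`:
`(1-γ)‖Z‖_F² ≤ Re tr((ΦZ)* (ΦΦ*)⁻¹ (ΦZ))` for every `t` row-sparse `Z`. -/
def IsPRIC {M N : ℕ} (L : ℕ) (Φ : Matrix (Fin M) (Fin N) ℂ) (t : ℕ) (γ : ℝ) : Prop :=
  ∀ Z : Matrix (Fin N) (Fin L) ℂ, (rowSupp Z).card ≤ t →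
    (1 - γ) * frobNorm Z ^ 2 ≤ (Matrix.trace ((Φ * Z)ᴴ * ((Φ * Φᴴ)⁻¹ * (Φ * Z)))).re

/-- `θ` is an upper restricted isometry constant of order `t` for `A`:
`‖AZ‖_F² ≤ (1+θ)‖Z‖_F²` for every `t` row-sparse `Z`. -/
def IsUpperRIC {M N : ℕ} (L : ℕ) (A : Matrix (Fin M) (Fin N) ℂ) (t : ℕ) (θ : ℝ) : Prop :=
  ∀ Z : Matrix (Fin N) (Fin L) ℂ, (rowSupp Z).card ≤ t →
    frobNorm (A * Z) ^ 2 ≤ (1 + θ) * frobNorm Z ^ 2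

/-- The least-squares feedback of `X` on the index set `T`:
rows outside `T` are zero and on `T` it equals
`X_{(T)} + (Φ_T* Φ_T)⁻¹ Φ_T* Φ_{T^c} X_{(T^c)}`. -/
noncomputable def feedback {M N L : ℕ} (Φ : Matrix (Fin M) (Fin N) ℂ) (T : Finset (Fin N))
    (X : Matrix (Fin N) (Fin L) ℂ) : Matrix (Fin N) (Fin L) ℂ :=
  fun i j =>
    if h : i ∈ T then
      (rowSub T X +
        ((colSub Φ T)ᴴ * colSub Φ T)⁻¹ * (colSub Φ T)ᴴ *
          (colSub Φ Tᶜ * rowSub Tᶜ X)) ⟨i, h⟩ j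
    else 0

/- The tuned iterate `Z` of `W` satisfies `X - Z = P (X - W)`, where `P` is the orthogonal
projection onto the null space of `Φ`. Three estimates are chained, with `S` the row support of `X`.
* The feedback error `V` satisfies `Φ_T* Φ V = 0`, and `Φ` nearly preserves inner products of sparse
  matrices, so `‖V_(T)‖ ≤ δ ‖V‖` and `(1 - δ²) ‖V‖² ≤ ‖V_(T^c)‖² = ‖X_(S \ T)‖²`.
* Among equally many rows of `Q`, those in `T` carry the most energy, and multiplying by `R`
  distorts row norms by a factor between `σ_min` and `σ_max`, so `‖Z_(S \ T)‖ ≤ α ‖Z_(T \ S)‖`. As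
  `X` vanishes on `T \ S`, this gives `‖X_(S \ T)‖² ≤ (1 + α²) ‖(X - Z)_(S ∪ T)‖²`.
* The P-RIC says `‖P A‖² ≤ γ ‖A‖²` for sparse `A`. Testing `P (X - W)` against its own restriction
  to `S ∪ T` yields `‖(X - Z)_(S ∪ T)‖ ≤ γ ‖X - W‖`. -/

section SingularValues

open scoped Matrix.Norms.L2Operator

variable {m n : Type*} [Fintype m] [Fintype n] {L : ℕ}

theorem vecNorm_nonneg (v : n → ℂ) : 0 ≤ vecNorm v :=
  Real.sqrt_nonneg _

theorem vecNorm_eq_norm_toLp (v : n → ℂ) : vecNorm v = ‖WithLp.toLp 2 v‖ :=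
  (EuclideanSpace.norm_eq _).symm

theorem vecNorm_star (v : n → ℂ) : vecNorm (star v) = vecNorm v := by
  simp [vecNorm]

theorem vecNorm_smul (c : ℂ) (v : n → ℂ) : vecNorm (c • v) = ‖c‖ * vecNorm v := by
  simp only [vecNorm_eq_norm_toLp, WithLp.toLp_smul, norm_smul]

theorem vecNorm_mulVec_le [DecidableEq n] (A : Matrix m n ℂ) (v : n → ℂ) :
    vecNorm (A *ᵥ v) ≤ ‖A‖ * vecNorm v := by
  simpa only [vecNorm_eq_norm_toLp] using! Matrix.l2_opNorm_mulVec A (WithLp.toLp 2 v)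

theorem vecNorm_vecMul_le [DecidableEq n] (q : m → ℂ) (A : Matrix m n ℂ) :
    vecNorm (q ᵥ* A) ≤ ‖A‖ * vecNorm q := by
  classical
  have h := vecNorm_mulVec_le Aᴴ (star q)
  rwa [← Matrix.star_vecMul, vecNorm_star, vecNorm_star, Matrix.l2_opNorm_conjTranspose] at h

theorem sigmaMax_eq_norm (R : Matrix (Fin L) (Fin L) ℂ) : sigmaMax R = ‖R‖ := by
  rw [Matrix.cstar_norm_def, ← ContinuousLinearMap.sSup_sphere_eq_norm, sigmaMax]
  congr 1
  ext c
  constructor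
  · rintro ⟨v, hv, rfl⟩
    refine ⟨WithLp.toLp 2 v, by simpa [vecNorm_eq_norm_toLp] using hv, ?_⟩
    simp [vecNorm_eq_norm_toLp]
  · rintro ⟨v, hv, rfl⟩
    refine ⟨v.ofLp, by simpa [vecNorm_eq_norm_toLp] using hv, ?_⟩
    simp only [vecNorm_eq_norm_toLp, ← Matrix.ofLp_toEuclideanCLM]

theorem sigmaMin_nonneg (R : Matrix (Fin L) (Fin L) ℂ) : 0 ≤ sigmaMin R :=
  Real.sInf_nonneg <| by rintro _ ⟨v, -, rfl⟩; exact vecNorm_nonneg _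

theorem sigmaMin_mul_vecNorm_le_mulVec (R : Matrix (Fin L) (Fin L) ℂ) (v : Fin L → ℂ) :
    sigmaMin R * vecNorm v ≤ vecNorm (R *ᵥ v) := by
  rcases (vecNorm_nonneg v).eq_or_lt with hv | hv
  · simpa [← hv] using vecNorm_nonneg (R *ᵥ v)
  have hnorm : ‖((vecNorm v)⁻¹ : ℂ)‖ = (vecNorm v)⁻¹ := by simp [abs_of_pos hv]
  have hmem : (vecNorm v)⁻¹ * vecNorm (R *ᵥ v) ∈ sigmaSet R :=
    ⟨((vecNorm v)⁻¹ : ℂ) • v, by rw [vecNorm_smul, hnorm, inv_mul_cancel₀ hv.ne'],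
      by rw [Matrix.mulVec_smul, vecNorm_smul, hnorm]⟩
  have hbdd : BddBelow (sigmaSet R) := ⟨0, by rintro _ ⟨w, -, rfl⟩; exact vecNorm_nonneg _⟩
  rw [← le_div_iff₀ hv, div_eq_inv_mul]
  exact csInf_le hbdd hmem

theorem sigmaMin_mul_norm_inv_le_one {R : Matrix (Fin L) (Fin L) ℂ} (hR : IsUnit R) :
    sigmaMin R * ‖R⁻¹‖ ≤ 1 := by
  rw [← Real.norm_of_nonneg (sigmaMin_nonneg R), ← Complex.norm_real, ← norm_smul,
    Matrix.cstar_norm_def]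
  refine ContinuousLinearMap.opNorm_le_bound _ zero_le_one fun v => ?_
  have h := sigmaMin_mul_vecNorm_le_mulVec R (R⁻¹ *ᵥ v.ofLp)
  rw [Matrix.mulVec_mulVec, Matrix.mul_nonsing_inv _ ((Matrix.isUnit_iff_isUnit_det R).1 hR),
    Matrix.one_mulVec] at h
  rw [vecNorm_eq_norm_toLp, vecNorm_eq_norm_toLp, ← Matrix.ofLp_toEuclideanCLM] at h
  rwa [map_smul, _root_.smul_apply, norm_smul, Complex.norm_real,
    Real.norm_of_nonneg (sigmaMin_nonneg R), one_mul]

theorem sigmaMin_mul_vecNorm_le_vecMul {R : Matrix (Fin L) (Fin L) ℂ} (hR : IsUnit R)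
    (q : Fin L → ℂ) : sigmaMin R * vecNorm q ≤ vecNorm (q ᵥ* R) := by
  have hq : (q ᵥ* R) ᵥ* R⁻¹ = q := by
    rw [Matrix.vecMul_vecMul, Matrix.mul_nonsing_inv _ ((Matrix.isUnit_iff_isUnit_det R).1 hR),
      Matrix.vecMul_one]
  calc sigmaMin R * vecNorm q
      ≤ sigmaMin R * (‖R⁻¹‖ * vecNorm (q ᵥ* R)) := by
        gcongr
        · exact sigmaMin_nonneg R
        · simpa only [hq] using vecNorm_vecMul_le (q ᵥ* R) R⁻¹
    _ = sigmaMin R * ‖R⁻¹‖ * vecNorm (q ᵥ* R) := (mul_assoc _ _ _).symm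
    _ ≤ vecNorm (q ᵥ* R) :=
        mul_le_of_le_one_left (vecNorm_nonneg _) (sigmaMin_mul_norm_inv_le_one hR)

theorem frobNorm_nonneg (A : Matrix m n ℂ) : 0 ≤ frobNorm A :=
  Real.sqrt_nonneg _

theorem frobNorm_sq (A : Matrix m n ℂ) : frobNorm A ^ 2 = ∑ i, vecNorm (A i) ^ 2 := by
  have hrow (i : m) : 0 ≤ ∑ j, ‖A i j‖ ^ 2 := by positivity
  simp only [frobNorm, vecNorm, Real.sq_sqrt (hrow _),
    Real.sq_sqrt (Finset.sum_nonneg fun i _ => hrow i)]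

theorem frobNorm_mul_le_sigmaMax_mul (A : Matrix m (Fin L) ℂ) (R : Matrix (Fin L) (Fin L) ℂ) :
    frobNorm (A * R) ≤ sigmaMax R * frobNorm A := by
  have hσ : 0 ≤ sigmaMax R := sigmaMax_eq_norm R ▸ norm_nonneg R
  refine le_of_sq_le_sq ?_ (mul_nonneg hσ (frobNorm_nonneg A))
  simp only [mul_pow, frobNorm_sq, Finset.mul_sum]
  simp only [← mul_pow]
  gcongr with i
  · exact vecNorm_nonneg _
  · exact sigmaMax_eq_norm R ▸ vecNorm_vecMul_le (A i) R

theorem sigmaMin_mul_frobNorm_le (A : Matrix m (Fin L) ℂ) {R : Matrix (Fin L) (Fin L) ℂ}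
    (hR : IsUnit R) : sigmaMin R * frobNorm A ≤ frobNorm (A * R) := by
  refine le_of_sq_le_sq ?_ (frobNorm_nonneg _)
  simp only [mul_pow, frobNorm_sq, Finset.mul_sum]
  simp only [← mul_pow]
  gcongr with i
  · exact mul_nonneg (sigmaMin_nonneg R) (vecNorm_nonneg _)
  · exact sigmaMin_mul_vecNorm_le_vecMul hR (A i)

end SingularValues

section InnerProduct

open scoped InnerProductSpace

variable {𝕜 E F : Type*} [RCLike 𝕜] [SeminormedAddCommGroup E] [InnerProductSpace 𝕜 E]
  [SeminormedAddCommGroup F] [InnerProductSpace 𝕜 F]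

theorem abs_re_inner_map_map_sub_re_inner_le (A : E →ₗ[𝕜] F) {V : Submodule 𝕜 E} {δ : ℝ}
    (hδ : 0 ≤ δ) (hA : ∀ z ∈ V, |‖A z‖ ^ 2 - ‖z‖ ^ 2| ≤ δ * ‖z‖ ^ 2) {u v : E} (hu : u ∈ V)
    (hv : v ∈ V) : |RCLike.re ⟪A u, A v⟫_𝕜 - RCLike.re ⟪u, v⟫_𝕜| ≤ δ * (‖u‖ * ‖v‖) := by
  set g := RCLike.re ⟪A u, A v⟫_𝕜 - RCLike.re ⟪u, v⟫_𝕜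
  -- Polarization at `u ± x v`, for every real `x`; the optimal `x` is read off the discriminant.
  have hquad (x : ℝ) : 0 ≤ δ * ‖v‖ ^ 2 * (x * x) + -(2 * g) * x + δ * ‖u‖ ^ 2 := by
    have hxv := V.smul_mem (x : 𝕜) hv
    have hadd := (abs_le.1 (hA _ (V.add_mem hu hxv))).2
    have hsub := (abs_le.1 (hA _ (V.sub_mem hu hxv))).1
    simp only [map_add, map_sub, map_smul, norm_add_sq (𝕜 := 𝕜), norm_sub_sq (𝕜 := 𝕜),
      inner_smul_right, norm_smul, RCLike.re_ofReal_mul, mul_pow, RCLike.norm_ofReal,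
      sq_abs] at hadd hsub
    linarith
  have hdiscrim := discrim_le_zero hquad
  rw [discrim] at hdiscrim
  refine abs_le_of_sq_le_sq ?_ (by positivity)
  linarith

end InnerProduct

section Frobenius

open scoped InnerProductSpace Matrix.Norms.Frobenius

variable {l m n : Type*} [Fintype l] [Fintype m] [Fintype n]

theorem frobNorm_eq_norm (A : Matrix m n ℂ) : frobNorm A = ‖A‖ := by
  simp [frobNorm, Matrix.frobenius_norm_def, Real.sqrt_eq_rpow]

/-- The Frobenius inner product `⟪A, B⟫ = tr (A* B)`, conjugate-linear in the first argument. It is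
only a local instance because matrices carry several natural norms. -/
@[reducible]
noncomputable def frobeniusInnerProductSpace : InnerProductSpace ℂ (Matrix m n ℂ) where
  inner A B := (Aᴴ * B).trace
  norm_sq_eq_re_inner A := by
    rw [← frobNorm_eq_norm, frobNorm, Real.sq_sqrt (by positivity), Finset.sum_comm]
    simp [Matrix.trace, Matrix.mul_apply, Complex.conj_mul', ← Complex.ofReal_pow]
  conj_inner_symm A B := by
    rw [starRingEnd_apply, ← Matrix.trace_conjTranspose, Matrix.conjTranspose_mul,
      Matrix.conjTranspose_conjTranspose]
  add_left A B C := by simp [Matrix.add_mul]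
  smul_left A B c := by simp

attribute [local instance] frobeniusInnerProductSpace

theorem frobenius_inner_def (A B : Matrix m n ℂ) : ⟪A, B⟫_ℂ = (Aᴴ * B).trace :=
  rfl

theorem frobenius_inner_mul_left (P : Matrix l m ℂ) (A : Matrix m n ℂ) (B : Matrix l n ℂ) :
    ⟪P * A, B⟫_ℂ = ⟪A, Pᴴ * B⟫_ℂ := by
  simp only [frobenius_inner_def, Matrix.conjTranspose_mul, Matrix.mul_assoc]

theorem frobenius_inner_mul_mul_of_isStarProjection {P : Matrix m m ℂ}
    (hP : IsStarProjection P) (A B : Matrix m n ℂ) : ⟪P * A, P * B⟫_ℂ = ⟪A, P * B⟫_ℂ := by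
  rw [frobenius_inner_mul_left, ← Matrix.mul_assoc, ← Matrix.star_eq_conjTranspose,
    hP.isSelfAdjoint.star_eq, hP.isIdempotentElem.eq]

section RowRestrict

variable {M N L : ℕ} {S T U : Finset (Fin N)} {Z : Matrix (Fin N) (Fin L) ℂ}

theorem eq_zero_of_notMem_rowSupp {i : Fin N} (hi : i ∉ rowSupp Z) : Z i = 0 := by
  simpa [rowSupp] using hi

theorem rowSupp_subset_iff : rowSupp Z ⊆ U ↔ ∀ i ∉ U, Z i = 0 := by
  refine ⟨fun h i hi => eq_zero_of_notMem_rowSupp fun hiZ => hi (h hiZ), fun h i hi => ?_⟩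
  have hiZ : Z i ≠ 0 := by simpa [rowSupp] using hi
  exact not_not.1 fun hiU => hiZ (h i hiU)

theorem rowSupp_zero : rowSupp (0 : Matrix (Fin N) (Fin L) ℂ) = ∅ :=
  Finset.subset_empty.1 (rowSupp_subset_iff.2 fun _ _ => rfl)

theorem rowSupp_sub_subset (A B : Matrix (Fin N) (Fin L) ℂ) :
    rowSupp (A - B) ⊆ rowSupp A ∪ rowSupp B := by
  refine rowSupp_subset_iff.2 fun i hi => ?_
  rw [Finset.mem_union, not_or] at hi
  exact (congrArg₂ (· - ·) (eq_zero_of_notMem_rowSupp hi.1)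
    (eq_zero_of_notMem_rowSupp hi.2)).trans (sub_zero 0)

/-- The subspace of the matrices whose rows outside `U` vanish: the row-sparse matrices with a
common row support, on which restricted isometry constants act linearly. -/
def rowSupported (L : ℕ) (U : Finset (Fin N)) : Submodule ℂ (Matrix (Fin N) (Fin L) ℂ) where
  carrier := {Z | ∀ i ∉ U, Z i = 0}
  add_mem' hA hB i hi := (congrArg₂ (· + ·) (hA i hi) (hB i hi)).trans (add_zero 0)
  zero_mem' _ _ := rfl
  smul_mem' c _ hA i hi := (congrArg (c • ·) (hA i hi)).trans (smul_zero c)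

theorem mem_rowSupported : Z ∈ rowSupported L U ↔ rowSupp Z ⊆ U :=
  rowSupp_subset_iff.symm

theorem rowSupp_rowRestrict_subset (T : Finset (Fin N)) (Z : Matrix (Fin N) (Fin L) ℂ) :
    rowSupp (rowRestrict T Z) ⊆ T ∩ rowSupp Z := by
  refine rowSupp_subset_iff.2 fun i hi => funext fun j => ?_
  by_cases hT : i ∈ T
  · have hZ : Z i = 0 := eq_zero_of_notMem_rowSupp fun h => hi (Finset.mem_inter.2 ⟨hT, h⟩)
    simp [rowRestrict, hZ]
  · simp [rowRestrict, hT]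

theorem rowRestrict_add_rowRestrict_compl (T : Finset (Fin N)) (Z : Matrix (Fin N) (Fin L) ℂ) :
    rowRestrict T Z + rowRestrict Tᶜ Z = Z := by
  ext i j
  by_cases hi : i ∈ T <;> simp [rowRestrict, hi]

theorem rowRestrict_sub (T : Finset (Fin N)) (A B : Matrix (Fin N) (Fin L) ℂ) :
    rowRestrict T (A - B) = rowRestrict T A - rowRestrict T B := by
  ext i j
  by_cases hi : i ∈ T <;> simp [rowRestrict, hi]

theorem rowRestrict_mul (T : Finset (Fin N)) (Q : Matrix (Fin N) (Fin L) ℂ)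
    {K : ℕ} (R : Matrix (Fin L) (Fin K) ℂ) : rowRestrict T (Q * R) = rowRestrict T Q * R := by
  ext i j
  by_cases hi : i ∈ T <;> simp [rowRestrict, Matrix.mul_apply, hi]

theorem mul_rowRestrict (Φ : Matrix (Fin M) (Fin N) ℂ) (T : Finset (Fin N))
    (Z : Matrix (Fin N) (Fin L) ℂ) : Φ * rowRestrict T Z = colSub Φ T * rowSub T Z := by
  ext i j
  simpa [Matrix.mul_apply, rowRestrict, colSub, rowSub] using
    (Finset.sum_attach T fun k => Φ i k * Z k j).symm

theorem norm_rowRestrict_sq (T : Finset (Fin N)) (Z : Matrix (Fin N) (Fin L) ℂ) :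
    ‖rowRestrict T Z‖ ^ 2 = ∑ i ∈ T, vecNorm (Z i) ^ 2 := by
  rw [← frobNorm_eq_norm, frobNorm_sq, ← Finset.sum_subset (Finset.subset_univ T)]
  · refine Finset.sum_congr rfl fun i hi => ?_
    congr 2
    ext j
    simp [rowRestrict, hi]
  · intro i _ hi
    simp [vecNorm, rowRestrict, hi]

theorem norm_rowRestrict_sq_add_compl (T : Finset (Fin N)) (Z : Matrix (Fin N) (Fin L) ℂ) :
    ‖rowRestrict T Z‖ ^ 2 + ‖rowRestrict Tᶜ Z‖ ^ 2 = ‖Z‖ ^ 2 := by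
  rw [norm_rowRestrict_sq, norm_rowRestrict_sq, Finset.sum_add_sum_compl, ← frobNorm_sq,
    frobNorm_eq_norm]

theorem norm_rowRestrict_sdiff_sq_add_le (S T : Finset (Fin N)) (Z : Matrix (Fin N) (Fin L) ℂ) :
    ‖rowRestrict (S \ T) Z‖ ^ 2 + ‖rowRestrict (T \ S) Z‖ ^ 2 ≤ ‖rowRestrict (S ∪ T) Z‖ ^ 2 := by
  simp only [norm_rowRestrict_sq]
  rw [← Finset.sum_union (disjoint_sdiff_sdiff)]
  exact Finset.sum_le_sum_of_subset_of_nonneg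
    (Finset.union_subset_union Finset.sdiff_subset Finset.sdiff_subset)
    fun i _ _ => sq_nonneg _

theorem re_inner_rowRestrict_self (T : Finset (Fin N)) (Z : Matrix (Fin N) (Fin L) ℂ) :
    RCLike.re ⟪rowRestrict T Z, Z⟫_ℂ = ‖rowRestrict T Z‖ ^ 2 := by
  have h : ⟪rowRestrict T Z, Z⟫_ℂ = ⟪rowRestrict T Z, rowRestrict T Z⟫_ℂ := by
    simp only [frobenius_inner_def, Matrix.trace, Matrix.diag, Matrix.mul_apply, rowRestrict,
      Matrix.conjTranspose_apply]
    refine Finset.sum_congr rfl fun j _ => Finset.sum_congr rfl fun i _ => ?_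
    split_ifs <;> simp
  rw [h, ← norm_sq_eq_re_inner]

theorem norm_rowRestrict_le_of_re_inner_le {c : ℝ} (hc : 0 ≤ c)
    (h : RCLike.re ⟪rowRestrict T Z, Z⟫_ℂ ≤ c * ‖rowRestrict T Z‖) : ‖rowRestrict T Z‖ ≤ c := by
  rw [re_inner_rowRestrict_self, sq] at h
  rcases (norm_nonneg (rowRestrict T Z)).eq_or_lt with h₀ | hpos
  · rwa [← h₀]
  · exact le_of_mul_le_mul_right h hpos

end RowRestrict

section LeastSquares

variable {M N L t : ℕ} {Φ : Matrix (Fin M) (Fin N) ℂ} {δ : ℝ} {T : Finset (Fin N)}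

theorem IsRIC.norm_rowRestrict_le (h : IsRIC L Φ t δ) (hδ : 0 ≤ δ)
    {V : Matrix (Fin N) (Fin L) ℂ} (hV : (rowSupp V).card ≤ t)
    (horth : (colSub Φ T)ᴴ * (Φ * V) = 0) : ‖rowRestrict T V‖ ≤ δ * ‖V‖ := by
  have hisom : ∀ Z ∈ rowSupported L (rowSupp V),
      |‖mulLeftLinearMap (Fin L) ℂ Φ Z‖ ^ 2 - ‖Z‖ ^ 2| ≤ δ * ‖Z‖ ^ 2 := by
    intro Z hZ
    have hZt := h Z ((Finset.card_le_card (mem_rowSupported.1 hZ)).trans hV)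
    simp only [frobNorm_eq_norm] at hZt
    rw [mulLeftLinearMap_apply, abs_le]
    constructor <;> linarith
  have hinner : ⟪Φ * rowRestrict T V, Φ * V⟫_ℂ = 0 := by
    rw [mul_rowRestrict, frobenius_inner_mul_left, horth, inner_zero_right]
  have hnear := abs_re_inner_map_map_sub_re_inner_le (mulLeftLinearMap (Fin L) ℂ Φ) hδ hisom
    (mem_rowSupported.2 ((rowSupp_rowRestrict_subset T V).trans Finset.inter_subset_right))
    (mem_rowSupported.2 subset_rfl)
  rw [mulLeftLinearMap_apply, mulLeftLinearMap_apply, hinner, map_zero, zero_sub, abs_neg] at hnear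
  refine norm_rowRestrict_le_of_re_inner_le (by positivity) ?_
  linarith [le_of_abs_le hnear]

theorem IsRIC.one_sub_sq_mul_norm_sq_le (h : IsRIC L Φ t δ) (hδ : 0 ≤ δ)
    {V : Matrix (Fin N) (Fin L) ℂ} (hV : (rowSupp V).card ≤ t)
    (horth : (colSub Φ T)ᴴ * (Φ * V) = 0) :
    (1 - δ ^ 2) * ‖V‖ ^ 2 ≤ ‖rowRestrict Tᶜ V‖ ^ 2 := by
  have hT : ‖rowRestrict T V‖ ^ 2 ≤ (δ * ‖V‖) ^ 2 := by
    gcongr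
    exact h.norm_rowRestrict_le hδ hV horth
  linarith [norm_rowRestrict_sq_add_compl T V, mul_pow δ ‖V‖ 2]

theorem rowSupp_feedback_subset (Φ : Matrix (Fin M) (Fin N) ℂ) (T : Finset (Fin N))
    (Z : Matrix (Fin N) (Fin L) ℂ) : rowSupp (feedback Φ T Z) ⊆ T :=
  rowSupp_subset_iff.2 fun i hi => funext fun j => by simp [feedback, hi]

theorem mul_feedback (Φ : Matrix (Fin M) (Fin N) ℂ) (T : Finset (Fin N))
    (Z : Matrix (Fin N) (Fin L) ℂ) :
    Φ * feedback Φ T Z = colSub Φ T * (rowSub T Z +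
      ((colSub Φ T)ᴴ * colSub Φ T)⁻¹ * (colSub Φ T)ᴴ * (colSub Φ Tᶜ * rowSub Tᶜ Z)) := by
  have hres : rowRestrict T (feedback Φ T Z) = feedback Φ T Z := by
    ext i j
    by_cases hi : i ∈ T <;> simp [rowRestrict, feedback, hi]
  rw [← hres, mul_rowRestrict]
  congr 1
  ext i j
  simp [rowSub, feedback]

theorem conjTranspose_colSub_mul_mul_feedback (hT : IsUnit ((colSub Φ T)ᴴ * colSub Φ T))
    (Z : Matrix (Fin N) (Fin L) ℂ) :
    (colSub Φ T)ᴴ * (Φ * feedback Φ T Z) = (colSub Φ T)ᴴ * (Φ * Z) := by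
  have hdet := (Matrix.isUnit_iff_isUnit_det _).1 hT
  have hsplit : Φ * Z = colSub Φ T * rowSub T Z + colSub Φ Tᶜ * rowSub Tᶜ Z := by
    rw [← mul_rowRestrict, ← mul_rowRestrict, ← Matrix.mul_add, rowRestrict_add_rowRestrict_compl]
  rw [mul_feedback, hsplit, ← Matrix.mul_assoc, Matrix.mul_add, Matrix.mul_add, Matrix.mul_assoc,
    Matrix.mul_assoc _⁻¹, Matrix.mul_nonsing_inv_cancel_left _ _ hdet]

theorem IsRIC.one_sub_sq_mul_norm_sub_feedback_sq_le (h : IsRIC L Φ t δ) (hδ : 0 ≤ δ)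
    {X Z : Matrix (Fin N) (Fin L) ℂ} (hT : IsUnit ((colSub Φ T)ᴴ * colSub Φ T))
    (hcard : (rowSupp X ∪ T).card ≤ t) (hZ : Φ * Z = Φ * X) :
    (1 - δ ^ 2) * ‖X - feedback Φ T Z‖ ^ 2 ≤ ‖rowRestrict (rowSupp X \ T) X‖ ^ 2 := by
  have hsupp : (rowSupp (X - feedback Φ T Z)).card ≤ t :=
    (Finset.card_le_card ((rowSupp_sub_subset _ _).trans
      (Finset.union_subset_union_right (rowSupp_feedback_subset Φ T Z)))).trans hcard
  have horth : (colSub Φ T)ᴴ * (Φ * (X - feedback Φ T Z)) = 0 := by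
    rw [Matrix.mul_sub, Matrix.mul_sub, conjTranspose_colSub_mul_mul_feedback hT, hZ, sub_self]
  have hcompl : rowRestrict Tᶜ (X - feedback Φ T Z) = rowRestrict (rowSupp X \ T) X := by
    ext i j
    by_cases hi : i ∈ T <;> by_cases hiX : X i = 0 <;>
      simp [rowRestrict, feedback, rowSupp, hi, hiX]
  exact hcompl ▸ h.one_sub_sq_mul_norm_sq_le hδ hsupp horth

end LeastSquares

section NullSpaceTuning

variable {M N L t : ℕ} {Φ : Matrix (Fin M) (Fin N) ℂ} {γ : ℝ}

/-- The orthogonal projection `I - Φ* (Φ Φ*)⁻¹ Φ` onto the null space of `Φ`, for `Φ Φ*` invertible: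
null space tuning maps the error `X - W` to its image under this projection. -/
noncomputable def nullProj (Φ : Matrix (Fin M) (Fin N) ℂ) : Matrix (Fin N) (Fin N) ℂ :=
  1 - Φᴴ * (Φ * Φᴴ)⁻¹ * Φ

theorem mul_nullProj (hΦ : IsUnit (Φ * Φᴴ)) : Φ * nullProj Φ = 0 := by
  rw [nullProj, Matrix.mul_sub, Matrix.mul_one, ← Matrix.mul_assoc, ← Matrix.mul_assoc,
    Matrix.mul_nonsing_inv _ ((Matrix.isUnit_iff_isUnit_det _).1 hΦ), Matrix.one_mul, sub_self]

theorem isStarProjection_nullProj (hΦ : IsUnit (Φ * Φᴴ)) : IsStarProjection (nullProj Φ) where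
  isIdempotentElem := by
    rw [IsIdempotentElem]
    nth_rw 1 [nullProj]
    rw [Matrix.sub_mul, Matrix.one_mul, Matrix.mul_assoc, mul_nullProj hΦ, Matrix.mul_zero,
      sub_zero]
  isSelfAdjoint := by
    rw [IsSelfAdjoint, Matrix.star_eq_conjTranspose]
    simp [nullProj, Matrix.conjTranspose_nonsing_inv, Matrix.mul_assoc]

theorem sub_tune_eq_nullProj_mul (Φ : Matrix (Fin M) (Fin N) ℂ) (X W : Matrix (Fin N) (Fin L) ℂ) :
    X - (W + Φᴴ * ((Φ * Φᴴ)⁻¹ * (Φ * X - Φ * W))) = nullProj Φ * (X - W) := by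
  rw [nullProj, ← Matrix.mul_sub, Matrix.sub_mul, Matrix.one_mul, Matrix.mul_assoc,
    Matrix.mul_assoc, sub_add_eq_sub_sub]

theorem IsPRIC.norm_nullProj_mul_sq_le (h : IsPRIC L Φ t γ) (hΦ : IsUnit (Φ * Φᴴ))
    {Z : Matrix (Fin N) (Fin L) ℂ} (hZ : (rowSupp Z).card ≤ t) :
    ‖nullProj Φ * Z‖ ^ 2 ≤ γ * ‖Z‖ ^ 2 := by
  have hexpand : ⟪Z, nullProj Φ * Z⟫_ℂ =
      ⟪Z, Z⟫_ℂ - ((Φ * Z)ᴴ * ((Φ * Φᴴ)⁻¹ * (Φ * Z))).trace := by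
    simp only [frobenius_inner_def, nullProj, Matrix.conjTranspose_mul, Matrix.sub_mul,
      Matrix.mul_sub, Matrix.one_mul, Matrix.trace_sub, Matrix.mul_assoc]
  have hPRIC := h Z hZ
  rw [frobNorm_eq_norm] at hPRIC
  rw [norm_sq_eq_re_inner (𝕜 := ℂ), frobenius_inner_mul_mul_of_isStarProjection
    (isStarProjection_nullProj hΦ), hexpand, map_sub, ← norm_sq_eq_re_inner,
    RCLike.re_eq_complex_re]
  linarith

theorem IsPRIC.norm_rowRestrict_nullProj_mul_le (h : IsPRIC L Φ t γ) (hγ : 0 ≤ γ)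
    (hΦ : IsUnit (Φ * Φᴴ)) {U : Finset (Fin N)} (hU : U.card ≤ t)
    {A : Matrix (Fin N) (Fin L) ℂ} (hA : (rowSupp A).card ≤ t) :
    ‖rowRestrict U (nullProj Φ * A)‖ ≤ γ * ‖A‖ := by
  set P := nullProj Φ
  set D := rowRestrict U (P * A)
  have hnorm {Z : Matrix (Fin N) (Fin L) ℂ} (hZ : (rowSupp Z).card ≤ t) :
      ‖P * Z‖ ≤ √γ * ‖Z‖ := by
    rw [← Real.sqrt_sq (norm_nonneg Z), ← Real.sqrt_mul hγ]
    exact Real.le_sqrt_of_sq_le (h.norm_nullProj_mul_sq_le hΦ hZ)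
  have hD : (rowSupp D).card ≤ t :=
    (Finset.card_le_card ((rowSupp_rowRestrict_subset U _).trans Finset.inter_subset_left)).trans hU
  refine norm_rowRestrict_le_of_re_inner_le (by positivity) ?_
  calc RCLike.re ⟪D, P * A⟫_ℂ
      = RCLike.re ⟪P * D, P * A⟫_ℂ := by
        rw [frobenius_inner_mul_mul_of_isStarProjection (isStarProjection_nullProj hΦ)]
    _ ≤ ‖P * D‖ * ‖P * A‖ := re_inner_le_norm _ _
    _ ≤ √γ * ‖D‖ * (√γ * ‖A‖) := by gcongr <;> exact hnorm ‹_›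
    _ = γ * ‖A‖ * ‖D‖ := by linear_combination ‖D‖ * ‖A‖ * Real.mul_self_sqrt hγ

end NullSpaceTuning

section Thresholding

variable {N L : ℕ} {S T : Finset (Fin N)}

theorem sum_sdiff_le_sum_sdiff_of_card_le {ι M : Type*} [DecidableEq ι] [AddCommMonoid M]
    [LinearOrder M] [IsOrderedAddMonoid M] {S T : Finset ι} {g : ι → M} (hg : ∀ i, 0 ≤ g i)
    (hcard : S.card ≤ T.card) (hT : ∀ i ∈ T, ∀ m ∉ T, g m ≤ g i) :
    ∑ i ∈ S \ T, g i ≤ ∑ i ∈ T \ S, g i := by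
  have hle : (S \ T).card ≤ (T \ S).card := Finset.card_sdiff_le_card_sdiff_iff.2 hcard
  rcases (S \ T).eq_empty_or_nonempty with hS | hS
  · simpa only [hS, Finset.sum_empty] using Finset.sum_nonneg fun i _ => hg i
  obtain ⟨m, hm, hmax⟩ := Finset.exists_max_image _ g hS
  calc ∑ i ∈ S \ T, g i
      ≤ (S \ T).card • g m := Finset.sum_le_card_nsmul _ _ _ hmax
    _ ≤ (T \ S).card • g m := nsmul_le_nsmul_left (hg m) hle
    _ ≤ ∑ i ∈ T \ S, g i := Finset.card_nsmul_le_sum _ _ _ fun i hi =>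
        hT i (Finset.mem_sdiff.1 hi).1 m (Finset.mem_sdiff.1 hm).2

theorem norm_rowRestrict_sdiff_le (hcard : S.card ≤ T.card) {Q : Matrix (Fin N) (Fin L) ℂ}
    (hT : ∀ i ∈ T, ∀ m ∉ T, vecNorm (Q m) ≤ vecNorm (Q i)) :
    ‖rowRestrict (S \ T) Q‖ ≤ ‖rowRestrict (T \ S) Q‖ := by
  refine le_of_sq_le_sq ?_ (norm_nonneg _)
  rw [norm_rowRestrict_sq, norm_rowRestrict_sq]
  exact sum_sdiff_le_sum_sdiff_of_card_le (fun i => sq_nonneg _) hcard fun i hi m hm =>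
    pow_le_pow_left₀ (vecNorm_nonneg _) (hT i hi m hm) 2

theorem norm_rowRestrict_sdiff_mul_le (hcard : S.card ≤ T.card) {Q : Matrix (Fin N) (Fin L) ℂ}
    (hT : ∀ i ∈ T, ∀ m ∉ T, vecNorm (Q m) ≤ vecNorm (Q i)) {R : Matrix (Fin L) (Fin L) ℂ}
    (hR : IsUnit R) {α : ℝ} (hα : 0 ≤ α) (hσ : sigmaMax R ≤ α * sigmaMin R) :
    ‖rowRestrict (S \ T) (Q * R)‖ ≤ α * ‖rowRestrict (T \ S) (Q * R)‖ := by
  have hmax := frobNorm_mul_le_sigmaMax_mul (rowRestrict (S \ T) Q) R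
  have hmin := sigmaMin_mul_frobNorm_le (rowRestrict (T \ S) Q) hR
  simp only [frobNorm_eq_norm, ← rowRestrict_mul] at hmax hmin
  calc ‖rowRestrict (S \ T) (Q * R)‖
      ≤ sigmaMax R * ‖rowRestrict (S \ T) Q‖ := hmax
    _ ≤ α * sigmaMin R * ‖rowRestrict (T \ S) Q‖ :=
        mul_le_mul hσ (norm_rowRestrict_sdiff_le hcard hT) (norm_nonneg _)
          (mul_nonneg hα (sigmaMin_nonneg R))
    _ = α * (sigmaMin R * ‖rowRestrict (T \ S) Q‖) := mul_assoc _ _ _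
    _ ≤ α * ‖rowRestrict (T \ S) (Q * R)‖ := by gcongr

theorem norm_rowRestrict_rowSupp_sdiff_sq_le {X Z : Matrix (Fin N) (Fin L) ℂ} {α : ℝ}
    (h : ‖rowRestrict (rowSupp X \ T) Z‖ ≤ α * ‖rowRestrict (T \ rowSupp X) Z‖) :
    ‖rowRestrict (rowSupp X \ T) X‖ ^ 2 ≤
      (1 + α ^ 2) * ‖rowRestrict (rowSupp X ∪ T) (X - Z)‖ ^ 2 := by
  set S := rowSupp X
  have hcauchy (a b : ℝ) : (a + α * b) ^ 2 ≤ (1 + α ^ 2) * (a ^ 2 + b ^ 2) := by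
    linarith [sq_nonneg (α * a - b)]
  have hX : rowRestrict (T \ S) X = 0 := by
    ext i j
    by_cases hi : i ∈ S
    · simp [rowRestrict, hi]
    · simp [rowRestrict, eq_zero_of_notMem_rowSupp hi]
  have hZ : ‖rowRestrict (T \ S) Z‖ = ‖rowRestrict (T \ S) (X - Z)‖ := by
    rw [rowRestrict_sub, hX, zero_sub, norm_neg]
  have htriangle : ‖rowRestrict (S \ T) X‖ ≤
      ‖rowRestrict (S \ T) (X - Z)‖ + α * ‖rowRestrict (T \ S) (X - Z)‖ := by
    refine (norm_le_norm_sub_add _ (rowRestrict (S \ T) Z)).trans ?_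
    rw [← rowRestrict_sub, ← hZ]
    gcongr
  set a := ‖rowRestrict (S \ T) (X - Z)‖
  set b := ‖rowRestrict (T \ S) (X - Z)‖
  calc ‖rowRestrict (S \ T) X‖ ^ 2
      ≤ (a + α * b) ^ 2 := pow_le_pow_left₀ (norm_nonneg _) htriangle 2
    _ ≤ (1 + α ^ 2) * (a ^ 2 + b ^ 2) := hcauchy a b
    _ ≤ (1 + α ^ 2) * ‖rowRestrict (S ∪ T) (X - Z)‖ ^ 2 := by
        gcongr
        exact norm_rowRestrict_sdiff_sq_add_le S T (X - Z)

end Thresholding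

section Recovery

variable {M N L t : ℕ} {Φ : Matrix (Fin M) (Fin N) ℂ} {δ γ α : ℝ} {T : Finset (Fin N)}
  {X W Z Q : Matrix (Fin N) (Fin L) ℂ} {R : Matrix (Fin L) (Fin L) ℂ}

theorem one_sub_sq_mul_frobNorm_sub_feedback_sq_le (hΦ : IsUnit (Φ * Φᴴ)) (hRIC : IsRIC L Φ t δ)
    (hδ : 0 ≤ δ) (hPRIC : IsPRIC L Φ t γ) (hγ : 0 ≤ γ) (hα : 0 ≤ α)
    (hXT : (rowSupp X ∪ T).card ≤ t) (hXW : (rowSupp X ∪ rowSupp W).card ≤ t)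
    (hcard : (rowSupp X).card ≤ T.card)
    (hZ : Z = W + Φᴴ * ((Φ * Φᴴ)⁻¹ * (Φ * X - Φ * W))) (hQR : Z = Q * R) (hR : IsUnit R)
    (hσ : sigmaMax R ≤ α * sigmaMin R)
    (hsel : ∀ i ∈ T, ∀ m ∉ T, vecNorm (Q m) ≤ vecNorm (Q i))
    (hT : IsUnit ((colSub Φ T)ᴴ * colSub Φ T)) :
    (1 - δ ^ 2) * frobNorm (X - feedback Φ T Z) ^ 2 ≤
      (1 + α ^ 2) * γ ^ 2 * frobNorm (X - W) ^ 2 := by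
  simp only [frobNorm_eq_norm]
  have herr : X - Z = nullProj Φ * (X - W) := hZ ▸ sub_tune_eq_nullProj_mul Φ X W
  have hΦZ : Φ * Z = Φ * X := by
    rw [← sub_eq_zero, ← neg_eq_zero, neg_sub, ← Matrix.mul_sub, herr, ← Matrix.mul_assoc,
      mul_nullProj hΦ, Matrix.zero_mul]
  have htune : ‖rowRestrict (rowSupp X ∪ T) (X - Z)‖ ≤ γ * ‖X - W‖ :=
    herr ▸ hPRIC.norm_rowRestrict_nullProj_mul_le hγ hΦ hXT
      ((Finset.card_le_card (rowSupp_sub_subset X W)).trans hXW)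
  calc (1 - δ ^ 2) * ‖X - feedback Φ T Z‖ ^ 2
      ≤ ‖rowRestrict (rowSupp X \ T) X‖ ^ 2 :=
        hRIC.one_sub_sq_mul_norm_sub_feedback_sq_le hδ hT hXT hΦZ
    _ ≤ (1 + α ^ 2) * ‖rowRestrict (rowSupp X ∪ T) (X - Z)‖ ^ 2 :=
        norm_rowRestrict_rowSupp_sdiff_sq_le
          (hQR ▸ norm_rowRestrict_sdiff_mul_le hcard hsel hR hα hσ)
    _ ≤ (1 + α ^ 2) * (γ * ‖X - W‖) ^ 2 := by gcongr
    _ = (1 + α ^ 2) * γ ^ 2 * ‖X - W‖ ^ 2 := by ring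

end Recovery

end Frobenius

theorem tendsto_of_tendsto_frobNorm_sub {ι m n : Type*} [Fintype m] [Fintype n] {l : Filter ι}
    {W : ι → Matrix m n ℂ} {X : Matrix m n ℂ}
    (h : Filter.Tendsto (fun k => frobNorm (X - W k)) l (nhds 0)) :
    Filter.Tendsto W l (nhds X) := by
  let : NormedAddCommGroup (Matrix m n ℂ) := Matrix.frobeniusNormedAddCommGroup
  refine tendsto_iff_norm_sub_tendsto_zero.2 ?_
  simpa only [frobNorm_eq_norm, norm_sub_rev] using h

theorem sqrt_div_lt_one {a b : ℝ} (h : a + b < 1) (ha : 0 ≤ a) : √(a / (1 - b)) < 1 := by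
  rw [Real.sqrt_lt' one_pos, one_pow, div_lt_one] <;> linarith

theorem le_sqrt_div_mul_of_mul_sq_le {a b x y : ℝ} (hb : 0 < b) (hy : 0 ≤ y)
    (h : b * x ^ 2 ≤ a * y ^ 2) : x ≤ √(a / b) * y := by
  rw [← Real.sqrt_sq hy, ← Real.sqrt_mul' _ (sq_nonneg y), div_mul_eq_mul_div]
  exact Real.le_sqrt_of_sq_le ((le_div_iff₀' hb).2 h)

/- The argument yields the constant `κ = 1 + α ^ 2`; the paper's `2 * α ^ 2` is larger when
`1 ≤ α`. -/
theorem stmt14_general {M N L s : ℕ} (Φ : Matrix (Fin M) (Fin N) ℂ) (hinv : IsUnit (Φ * Φᴴ))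
    (X : Matrix (Fin N) (Fin L) ℂ) (hXs : (rowSupp X).card ≤ s)
    (f : ℕ → ℕ) (hfs : ∀ j, 1 ≤ j → s ≤ f j)
    (δ γ α κ : ℝ) (hδ0 : 0 ≤ δ) (hγ : 0 ≤ γ) (hα : 0 ≤ α) (hκ : 1 + α ^ 2 ≤ κ)
    (hRIC : ∀ j, 1 ≤ j → IsRIC L Φ (s + f j + f (j - 1)) δ)
    (hPRIC : ∀ j, 1 ≤ j → IsPRIC L Φ (s + f j + f (j - 1)) γ)
    (W Xs Q : ℕ → Matrix (Fin N) (Fin L) ℂ) (Rm : ℕ → Matrix (Fin L) (Fin L) ℂ)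
    (T : ℕ → Finset (Fin N))
    (hW0 : (rowSupp (W 0)).card ≤ f 0)
    (hNST : ∀ j, 1 ≤ j →
      Xs j = W (j - 1) + Φᴴ * ((Φ * Φᴴ)⁻¹ * (Φ * X - Φ * W (j - 1))))
    (hQR : ∀ j, 1 ≤ j →
      IsUnit (Rm j) ∧ Xs j = Q j * Rm j ∧ sigmaMax (Rm j) ≤ α * sigmaMin (Rm j))
    (hTsel : ∀ j, 1 ≤ j →
      (T j).card = f j ∧ ∀ i ∈ T j, ∀ m ∉ T j, vecNorm (Q j m) ≤ vecNorm (Q j i))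
    (hTinv : ∀ j, 1 ≤ j → IsUnit ((colSub Φ (T j))ᴴ * colSub Φ (T j)))
    (hFB : ∀ j, 1 ≤ j → W j = feedback Φ (T j) (Xs j))
    (hsmall : κ * γ ^ 2 + δ ^ 2 < 1) :
    √(κ * γ ^ 2 / (1 - δ ^ 2)) < 1 ∧
      (∀ k, frobNorm (X - W k) ≤ √(κ * γ ^ 2 / (1 - δ ^ 2)) ^ k * frobNorm (X - W 0)) ∧
      Filter.Tendsto W Filter.atTop (nhds X) := by
  set ρ := √(κ * γ ^ 2 / (1 - δ ^ 2))
  have hκγ : (1 + α ^ 2) * γ ^ 2 ≤ κ * γ ^ 2 := by gcongr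
  have hκγ0 : 0 ≤ κ * γ ^ 2 := hκγ.trans' (by positivity)
  have hρ : ρ < 1 := sqrt_div_lt_one hsmall hκγ0
  have hWcard : ∀ j, (rowSupp (W j)).card ≤ f j
    | 0 => hW0
    | j + 1 => by
      rw [hFB _ j.succ_pos, ← (hTsel _ j.succ_pos).1]
      exact Finset.card_le_card (rowSupp_feedback_subset _ _ _)
  have hstep (j : ℕ) : frobNorm (X - W (j + 1)) ≤ ρ * frobNorm (X - W j) := by
    have hj : 1 ≤ j + 1 := j.succ_pos
    obtain ⟨hR, hXQR, hσ⟩ := hQR _ hj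
    obtain ⟨hTcard, hsel⟩ := hTsel _ hj
    have hXf : (rowSupp X).card ≤ f (j + 1) := hXs.trans (hfs _ hj)
    have hXT := Finset.card_union_le (rowSupp X) (T (j + 1))
    have hXW := Finset.card_union_le (rowSupp X) (rowSupp (W j))
    have hcontract := one_sub_sq_mul_frobNorm_sub_feedback_sq_le hinv (hRIC _ hj) hδ0 (hPRIC _ hj)
      hγ hα (by omega) (by grind) (hXf.trans_eq hTcard.symm) (hNST _ hj) hXQR hR hσ hsel
      (hTinv _ hj)
    rw [← hFB _ hj, Nat.add_sub_cancel] at hcontract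
    exact le_sqrt_div_mul_of_mul_sq_le (by linarith) (frobNorm_nonneg _)
      (hcontract.trans (by gcongr))
  have hgeom (k : ℕ) : frobNorm (X - W k) ≤ ρ ^ k * frobNorm (X - W 0) :=
    le_geom (u := fun k => frobNorm (X - W k)) (Real.sqrt_nonneg _) k fun j _ => hstep j
  have hlim := (tendsto_pow_atTop_nhds_zero_of_lt_one (Real.sqrt_nonneg _) hρ).mul_const
    (frobNorm (X - W 0))
  rw [zero_mul] at hlim
  exact ⟨hρ, hgeom, tendsto_of_tendsto_frobNorm_sub
    (squeeze_zero (fun _ => frobNorm_nonneg _) hgeom hlim)⟩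

/-- noiseless exact recovery of the OSNST+HT+f-FB algorithm. -/
theorem stmt14 {M N L s : ℕ} (Φ : Matrix (Fin M) (Fin N) ℂ) (hinv : IsUnit (Φ * Φᴴ))
    (X : Matrix (Fin N) (Fin L) ℂ)
    (Y : Matrix (Fin M) (Fin L) ℂ) (hY : Y = Φ * X)
    (hXs : (rowSupp X).card ≤ s)
    (f : ℕ → ℕ) (hfmono : Monotone f) (hfs : ∀ j, 1 ≤ j → s ≤ f j) (hf0 : f 0 = 0)
    (δ γ θ α : ℝ) (hδ0 : 0 ≤ δ) (hδ1 : δ < 1) (hγ : 0 ≤ γ) (hθ : 0 ≤ θ) (hα : 1 ≤ α)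
    (hRIC : ∀ j, 1 ≤ j → IsRIC L Φ (s + f j + f (j - 1)) δ)
    (hPRIC : ∀ j, 1 ≤ j → IsPRIC L Φ (s + f j + f (j - 1)) γ)
    (hURIC : ∀ j, 1 ≤ j → IsUpperRIC L ((Φ * Φᴴ)⁻¹ * Φ) (s + f j) θ)
    (W Xs Q : ℕ → Matrix (Fin N) (Fin L) ℂ) (Rm : ℕ → Matrix (Fin L) (Fin L) ℂ)
    (T : ℕ → Finset (Fin N))
    (hW0 : W 0 = 0)
    (hNST : ∀ j, 1 ≤ j →
      Xs j = W (j - 1) + Φᴴ * ((Φ * Φᴴ)⁻¹ * (Y - Φ * W (j - 1))))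
    (hQR : ∀ j, 1 ≤ j →
      (Q j)ᴴ * Q j = 1 ∧ IsUnit (Rm j) ∧ Xs j = Q j * Rm j ∧
        sigmaMax (Rm j) ≤ α * sigmaMin (Rm j))
    (hTsel : ∀ j, 1 ≤ j →
      (T j).card = f j ∧ ∀ i ∈ T j, ∀ m ∉ T j, vecNorm (Q j m) ≤ vecNorm (Q j i))
    (hTinv : ∀ j, 1 ≤ j → IsUnit ((colSub Φ (T j))ᴴ * colSub Φ (T j)))
    (hFB : ∀ j, 1 ≤ j → W j = feedback Φ (T j) (Xs j))
    (hsmall : 2 * α ^ 2 * γ ^ 2 + δ ^ 2 < 1) :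
    Real.sqrt (2 * α ^ 2 * γ ^ 2 / (1 - δ ^ 2)) < 1 ∧
      (∀ k, 1 ≤ k →
        frobNorm (X - W k) ≤ Real.sqrt (2 * α ^ 2 * γ ^ 2 / (1 - δ ^ 2)) ^ k * frobNorm X) ∧
      Filter.Tendsto W Filter.atTop (nhds X) := by
  obtain ⟨hρ, hgeom, hlim⟩ := stmt14_general Φ hinv X hXs f hfs δ γ α (2 * α ^ 2) hδ0 hγ
    (by linarith) (by nlinarith) hRIC hPRIC W Xs Q Rm T (by simp [hW0, rowSupp_zero]) (hY ▸ hNST)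
    (fun j hj => (hQR j hj).2) hTsel hTinv hFB hsmall
  exact ⟨hρ, fun k _ => by simpa only [hW0, sub_zero] using hgeom k, hlim⟩
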